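/- Under assumption (B2), the function q is independent of the mass distribution: for all words v, w ∈ 𝒲, the value q(v,w) computed from m equals the value q_hom(v,w) computed from the uniform mass distribution m_hom(a) = 1/N (with the same relation ∼). -/

import Mathlib

open Classical

namespace Martin

/-- Finite words over the alphabet `Fin N` (the empty list is the empty word `∅`;
`w ++ [i]` is the word `wi` and `w.dropLast` is the parent `w⁻`). -/
abbrev Word (N : ℕ) := List (Fin N)

/-- The mass of a word: `m(w₁⋯wₙ) = m(w₁)⋯m(wₙ)`, `m(∅) = 1`. -/
noncomputable def mW {N : ℕ} (m : Fin N → ℝ) (w : Word N) : ℝ := (w.map m).prod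

/-- Total mass of the equivalence class of `v`: `Σ_{v̂ ∼ v} m(v̂)`. -/
noncomputable def massCl {N : ℕ} (sim : Word N → Word N → Prop) (m : Fin N → ℝ)
    (v : Word N) : ℝ :=
  ∑ᶠ u ∈ {u : Word N | sim u v}, mW m u

/-- Transition probability: `p(v,w) = m(w)/(Σ_{v̂∼v} m(v̂))` if `w = v̂i` for some
`v̂ ∼ v`, `i ∈ 𝒜`, and `0` otherwise. -/
noncomputable def pTrans {N : ℕ} (sim : Word N → Word N → Prop) (m : Fin N → ℝ)
    (v w : Word N) : ℝ :=
  if ∃ v' : Word N, ∃ i : Fin N, sim v' v ∧ w = v' ++ [i] then mW m w / massCl sim m v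
  else 0

/-- `n`-step transition probabilities: `p₀(v,w) = δ_v(w)`,
`pₙ(v,w) = Σ_u pₙ₋₁(v,u) p(u,w)`. -/
noncomputable def pn {N : ℕ} (sim : Word N → Word N → Prop) (m : Fin N → ℝ) :
    ℕ → Word N → Word N → ℝ
  | 0, v, w => if w = v then 1 else 0
  | n + 1, v, w => ∑ᶠ u : Word N, pn sim m n v u * pTrans sim m u w

/-- The Green function `g(v,w) = p_{|w|−|v|}(v,w)` (it equals `0` when `|w| < |v|`,
by truncated subtraction and since then `v ≠ w`). -/
noncomputable def green {N : ℕ} (sim : Word N → Word N → Prop) (m : Fin N → ℝ)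
    (v w : Word N) : ℝ :=
  pn sim m (w.length - v.length) v w

/-- The function `q(v,w) = g(v,w)·(Σ_{v̂∼v} m(v̂))/m(w)` for `v ≠ w`, `q(v,v) = 1`. -/
noncomputable def qfun {N : ℕ} (sim : Word N → Word N → Prop) (m : Fin N → ℝ)
    (v w : Word N) : ℝ :=
  if v = w then 1 else green sim m v w * massCl sim m v / mW m w

/-- The Martin kernel `k(v,w) = g(v,w)/g(∅,w)`. -/
noncomputable def mkernel {N : ℕ} (sim : Word N → Word N → Prop) (m : Fin N → ℝ)
    (v w : Word N) : ℝ :=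
  green sim m v w / green sim m [] w

/-- `R(w)`: the number of words equivalent to `w`. -/
noncomputable def Rnum {N : ℕ} (sim : Word N → Word N → Prop) (w : Word N) : ℕ :=
  Set.ncard {u : Word N | sim u w}

/-- Assumption (B2): for every word `w`, either all equivalent words have the same mass,
or all equivalent words have equivalent parents. -/
def B2 {N : ℕ} (sim : Word N → Word N → Prop) (m : Fin N → ℝ) : Prop :=
  ∀ w : Word N, (∀ w', sim w' w → mW m w' = mW m w) ∨
    (∀ w', sim w' w → sim w'.dropLast w.dropLast)


theorem mW_pos {N : ℕ} (m : Fin N → ℝ) (hm : ∀ a, 0 < m a) (w : Word N) : 0 < mW m w := by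
  unfold mW
  apply List.prod_pos
  intro a ha
  obtain ⟨b, _, rfl⟩ := List.mem_map.1 ha
  exact hm b

theorem exists_cl {N : ℕ} (sim : Word N → Word N → Prop)
    (hlen : ∀ v w : Word N, sim v w → v.length = w.length) (w : Word N) :
    ∃ C : Finset (Word N), ∀ u, u ∈ C ↔ sim u w := by
  have hf : {u : Word N | sim u w}.Finite :=
    (List.finite_length_eq (Fin N) w.length).subset (fun u hu => hlen u w hu)
  exact ⟨hf.toFinset, fun u => by simp⟩

theorem massCl_eq {N : ℕ} (sim : Word N → Word N → Prop) (m : Fin N → ℝ) (w : Word N)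
    (C : Finset (Word N)) (hC : ∀ u, u ∈ C ↔ sim u w) :
    massCl sim m w = ∑ u ∈ C, mW m u := by
  unfold massCl
  have : {u : Word N | sim u w} = (C : Set (Word N)) := by ext u; simp [hC]
  rw [this, finsum_mem_coe_finset]

theorem massCl_congr {N : ℕ} (sim : Word N → Word N → Prop) (hsim : Equivalence sim)
    (m : Fin N → ℝ) (v w : Word N) (h : sim v w) :
    massCl sim m v = massCl sim m w := by
  unfold massCl
  have : {u : Word N | sim u v} = {u : Word N | sim u w} := by
    ext u
    exact ⟨fun hu => hsim.trans hu h, fun hu => hsim.trans hu (hsim.symm h)⟩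
  rw [this]

theorem massCl_pos {N : ℕ} (sim : Word N → Word N → Prop) (hsim : Equivalence sim)
    (hlen : ∀ v w : Word N, sim v w → v.length = w.length)
    (m : Fin N → ℝ) (hm : ∀ a, 0 < m a) (w : Word N) : 0 < massCl sim m w := by
  obtain ⟨C, hC⟩ := exists_cl sim hlen w
  rw [massCl_eq sim m w C hC]
  exact Finset.sum_pos (fun u _ => mW_pos m hm u) ⟨w, (hC w).2 (hsim.refl w)⟩

noncomputable def QQ {N : ℕ} (sim : Word N → Word N → Prop) (m : Fin N → ℝ) (n : ℕ)
    (v w : Word N) : ℝ := pn sim m n v w * massCl sim m v / mW m w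

theorem QQ_nil {N : ℕ} (sim : Word N → Word N → Prop) (m : Fin N → ℝ) (n : ℕ)
    (v : Word N) : QQ sim m (n+1) v [] = 0 := by
  simp [QQ, pn, pTrans]

theorem pTrans_eq {N : ℕ} (sim : Word N → Word N → Prop) (hsim : Equivalence sim)
    (m : Fin N → ℝ) (u x : Word N) (i : Fin N) :
    pTrans sim m u (x ++ [i]) = if sim u x then mW m (x ++ [i]) / massCl sim m x else 0 := by
  unfold pTrans
  by_cases h : sim u x
  · rw [if_pos h, if_pos ⟨x, i, hsim.symm h, rfl⟩, massCl_congr sim hsim m u x h]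
  · rw [if_neg h, if_neg]
    rintro ⟨v', j, h1, h2⟩
    obtain ⟨rfl, _⟩ := List.append_inj' h2 rfl
    exact h (hsim.symm h1)

theorem QQ_succ {N : ℕ} (sim : Word N → Word N → Prop) (hsim : Equivalence sim)
    (m : Fin N → ℝ) (hm : ∀ a, 0 < m a) (n : ℕ)
    (v x : Word N) (i : Fin N) (C : Finset (Word N)) (hC : ∀ u, u ∈ C ↔ sim u x) :
    QQ sim m (n+1) v (x ++ [i]) = (∑ u ∈ C, QQ sim m n v u * mW m u) / ∑ u ∈ C, mW m u := by
  have h1 : pn sim m (n+1) v (x ++ [i]) =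
      ∑ u ∈ C, pn sim m n v u * (mW m (x ++ [i]) / massCl sim m x) := by
    rw [pn, finsum_eq_sum_of_support_subset (s := C)]
    · apply Finset.sum_congr rfl
      intro u hu
      rw [pTrans_eq sim hsim, if_pos ((hC u).1 hu)]
    · intro u hu
      by_contra h
      apply hu
      have h' : ¬ sim u x := fun h2 => h ((hC u).2 h2)
      simp only [pTrans_eq sim hsim, if_neg h', mul_zero]
  have h2 : ∀ u, QQ sim m n v u * mW m u = pn sim m n v u * massCl sim m v := by
    intro u
    have := (mW_pos m hm u).ne'
    unfold QQ
    field_simp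
  simp only [h2]
  rw [← massCl_eq sim m x C hC]
  unfold QQ
  rw [h1, ← Finset.sum_mul, ← Finset.sum_mul]
  have := (mW_pos m hm (x ++ [i])).ne'
  field_simp

theorem QQ_congr {N : ℕ} (sim : Word N → Word N → Prop) (hsim : Equivalence sim)
    (hlen : ∀ v w : Word N, sim v w → v.length = w.length)
    (m : Fin N → ℝ) (hm : ∀ a, 0 < m a) (n : ℕ)
    (v w w' : Word N) (h : sim w' w) (hd : sim w'.dropLast w.dropLast) :
    QQ sim m (n+1) v w' = QQ sim m (n+1) v w := by
  have hl := hlen _ _ h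
  rcases List.eq_nil_or_concat' w with rfl | ⟨x, i, rfl⟩
  · have : w' = [] := List.length_eq_zero_iff.1 hl
    rw [this]
  · rcases List.eq_nil_or_concat' w' with rfl | ⟨y, j, rfl⟩
    · simp at hl
    · simp only [List.dropLast_concat] at hd
      obtain ⟨C, hC⟩ := exists_cl sim hlen x
      rw [QQ_succ sim hsim m hm n v x i C hC, QQ_succ sim hsim m hm n v y j C]
      intro u
      rw [hC]
      exact ⟨fun hu => hsim.trans hu (hsim.symm hd), fun hu => hsim.trans hu hd⟩

theorem QQ_one {N : ℕ} (sim : Word N → Word N → Prop) (hsim : Equivalence sim)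
    (hlen : ∀ v w : Word N, sim v w → v.length = w.length)
    (m : Fin N → ℝ) (hm : ∀ a, 0 < m a)
    (v x : Word N) (i : Fin N) :
    QQ sim m 1 v (x ++ [i]) = if sim v x then 1 else 0 := by
  obtain ⟨C, hC⟩ := exists_cl sim hlen x
  rw [QQ_succ sim hsim m hm 0 v x i C hC, ← massCl_eq sim m x C hC]
  have h2 : ∀ u, QQ sim m 0 v u * mW m u = if u = v then massCl sim m v else 0 := by
    intro u
    have := (mW_pos m hm u).ne'
    simp only [QQ, pn]
    split_ifs
    · field_simp
    · simp
  simp only [h2]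
  rw [Finset.sum_ite_eq']
  by_cases h : sim v x
  · rw [if_pos ((hC v).2 h), if_pos h, massCl_congr sim hsim m v x h]
    exact div_self (massCl_pos sim hsim hlen m hm x).ne'
  · rw [if_neg (fun h' => h ((hC v).1 h')), if_neg h, zero_div]

theorem avg_const {α : Type*} (C : Finset α) (Q f : α → ℝ) (c : ℝ)
    (hQ : ∀ u ∈ C, Q u = c) (hf : ∑ u ∈ C, f u ≠ 0) :
    (∑ u ∈ C, Q u * f u) / ∑ u ∈ C, f u = c := by
  rw [Finset.sum_congr rfl (fun u hu => by rw [hQ u hu]), ← Finset.mul_sum]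
  field_simp

theorem avg_unif {α : Type*} (C : Finset α) (Q f : α → ℝ) (c : ℝ)
    (hf : ∀ u ∈ C, f u = c) (hc : c ≠ 0) :
    (∑ u ∈ C, Q u * f u) / ∑ u ∈ C, f u = (∑ u ∈ C, Q u) / C.card := by
  rw [Finset.sum_congr rfl (fun u hu => by rw [hf u hu]), ← Finset.sum_mul,
    Finset.sum_congr rfl hf, Finset.sum_const, nsmul_eq_mul]
  rw [mul_div_mul_right _ _ hc]

theorem QQ_indep {N : ℕ} (sim : Word N → Word N → Prop) (hsim : Equivalence sim)
    (hlen : ∀ v w : Word N, sim v w → v.length = w.length)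
    (m : Fin N → ℝ) (hm : ∀ a, 0 < m a) (hB2 : B2 sim m) (c : ℝ) (hc : 0 < c) (v : Word N)
    (n : ℕ) : ∀ w, QQ sim m (n+1) v w = QQ sim (fun _ => c) (n+1) v w := by
  induction n with
  | zero =>
    intro w
    rcases List.eq_nil_or_concat' w with rfl | ⟨x, i, rfl⟩
    · rw [QQ_nil, QQ_nil]
    · rw [QQ_one sim hsim hlen m hm, QQ_one sim hsim hlen _ (fun _ => hc)]
  | succ n ih =>
    intro w
    rcases List.eq_nil_or_concat' w with rfl | ⟨x, i, rfl⟩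
    · rw [QQ_nil, QQ_nil]
    · obtain ⟨C, hC⟩ := exists_cl sim hlen x
      rw [QQ_succ sim hsim m hm (n+1) v x i C hC,
        QQ_succ sim hsim (fun _ => c) (fun _ => hc) (n+1) v x i C hC]
      simp only [← ih]
      rcases hB2 x with h | h
      · rw [avg_unif C _ (mW m) (mW m x) (fun u hu => h u ((hC u).1 hu)) (mW_pos m hm x).ne',
          avg_unif C _ (mW (fun _ => c)) (c ^ x.length) (fun u hu => by
            simp [mW, hlen u x ((hC u).1 hu)]) (pow_pos hc _).ne']
      · have hQ : ∀ u ∈ C, QQ sim m (n+1) v u = QQ sim m (n+1) v x := fun u hu =>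
          QQ_congr sim hsim hlen m hm n v x u ((hC u).1 hu) (h u ((hC u).1 hu))
        have hne : C.Nonempty := ⟨x, (hC x).2 (hsim.refl x)⟩
        rw [avg_const C _ _ _ hQ (Finset.sum_pos (fun u _ => mW_pos m hm u) hne).ne',
          avg_const C _ _ _ hQ (Finset.sum_pos (fun u _ => mW_pos _ (fun _ => hc) u) hne).ne']

/-- Theorem 3.11, second part: under (B2) the function `q` is
independent of the mass distribution `m`: it coincides with the homogeneous one. -/
theorem qfun_independent_of_mass {N : ℕ} (hN : 2 ≤ N)
    (sim : Word N → Word N → Prop) (hsim : Equivalence sim)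
    (hlen : ∀ v w : Word N, sim v w → v.length = w.length)
    (m : Fin N → ℝ) (hm : ∀ a, m a ∈ Set.Ioo (0 : ℝ) 1)
    (hm1 : ∑ a, m a = 1) (hB2 : B2 sim m) :
    ∀ v w : Word N, qfun sim m v w = qfun sim (fun _ : Fin N => (N : ℝ)⁻¹) v w := by
  intro v w
  have hc : (0 : ℝ) < (N : ℝ)⁻¹ := by
    have : 0 < N := by omega
    positivity
  unfold qfun
  by_cases hvw : v = w
  · rw [if_pos hvw, if_pos hvw]
  · rw [if_neg hvw, if_neg hvw]
    unfold green
    rcases w.length - v.length with _ | n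
    · simp [pn, Ne.symm hvw]
    · exact QQ_indep sim hsim hlen m (fun a => (hm a).1) hB2 _ hc v n w

end Martin
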